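/- arXiv:1308.1084 — 6 statements merged into one kernel-verified Lean document; each statement's English description precedes it below -/
import Mathlib

section
/- Deterministic unsatisfiability of geometric k-SAT at high density: fix integers d ≥ 1 and k ≥ 2 and a real γ > 0 with γ^d > k - 1. Then there exists N such that for all n ≥ N and every placement ω : ({1,…,n} × {true,false}) → [0,1]^d of the 2n literals, and for every assignment α : {1,…,n} → {true,false}, there exist k distinct variables v_1,…,v_k such that the k points ω(v_1, ¬α(v_1)),…,ω(v_k, ¬α(v_k)) (the positions of the k literals falsified by α) lie pairwise within ℓ∞ distance γ·n^{-1/d} of one another. In particular every such geometric k-SAT formula is unsatisfiable. -/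
/-!
The proof is a pigeonhole argument on a grid. Write `t = n ^ (1/d)` and `m = ⌈t/γ⌉`. The map
`x ↦ (⌊x i * m⌋)ᵢ` sends the unit cube to a set of at most `(m+1)^d` cells, and two points of the
same cell are within `1/m ≤ γ/t = γ * n ^ (-1/d)` of each other (`dist_le_of_floor_eq`). Since
`m + 1 ≤ t/γ + 2 = t (1/γ + 2/t)`, the bound `(k-1) (m+1)^d < t^d = n` holds as soon as
`(k-1) (1/γ + 2/t)^d < 1`, which is true for large `t` because the left side tends to
`(k-1)/γ^d < 1` (`eventually_density`). So some cell contains at least `k` of the `n` falsified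
literals. These form a clause that the assignment violates.
-/

/-- The geometric `k`-SAT formula determined by the placement `ω` (with radius `r` in the
`ℓ∞` distance) is satisfiable. -/
def GeomSatisfiable (d k n : ℕ) (r : ℝ) (ω : (Fin n × Bool) → (Fin d → ℝ)) : Prop :=
  ∃ α : Fin n → Bool, ∀ S : Finset (Fin n × Bool), S.card = k →
    (∀ l₁ ∈ S, ∀ l₂ ∈ S, dist (ω l₁) (ω l₂) ≤ r) →
    ∃ l ∈ S, α l.1 = l.2

open Filter Topology in
/-- For large `n` the number of grid cells, bounded by `(n ^ (1/d) / γ + 2) ^ d`, is small enough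
for the pigeonhole principle to give `k` points in one cell. -/
theorem eventually_density (d k : ℕ) (hd : 1 ≤ d) (γ : ℝ) (hγ : 0 < γ)
    (hγd : (k : ℝ) - 1 < γ ^ d) :
    ∃ N : ℕ, ∀ n ≥ N, 0 < (n : ℝ) ∧
      ((k : ℝ) - 1) * ((n : ℝ) ^ ((1 : ℝ) / d) / γ + 2) ^ d < n := by
  have hd0 : (0 : ℝ) < d := by exact_mod_cast hd
  have ht : Tendsto (fun n : ℕ => (n : ℝ) ^ ((1 : ℝ) / d)) atTop atTop :=
    (tendsto_rpow_atTop (by positivity)).comp tendsto_natCast_atTop_atTop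
  have hlim : Tendsto (fun n : ℕ => ((k : ℝ) - 1) * (1 / γ + 2 / (n : ℝ) ^ ((1 : ℝ) / d)) ^ d)
      atTop (𝓝 (((k : ℝ) - 1) * (1 / γ + 0) ^ d)) :=
    ((tendsto_const_nhds.add (ht.const_div_atTop 2)).pow d).const_mul _
  have hlt : ((k : ℝ) - 1) * (1 / γ + 0) ^ d < 1 := by
    rw [add_zero, div_pow, one_pow, mul_one_div, div_lt_one (by positivity)]
    exact hγd
  obtain ⟨N, hN⟩ := eventually_atTop.1
    ((hlim.eventually (gt_mem_nhds hlt)).and (eventually_gt_atTop 0))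
  refine ⟨N, fun n hn => ?_⟩
  obtain ⟨h1, h2⟩ := hN n hn
  have hn0 : (0 : ℝ) < n := by exact_mod_cast h2
  refine ⟨hn0, ?_⟩
  have ht0 : 0 < (n : ℝ) ^ ((1 : ℝ) / d) := Real.rpow_pos_of_pos hn0 _
  have htd : ((n : ℝ) ^ ((1 : ℝ) / d)) ^ d = n := by
    rw [one_div]
    exact Real.rpow_inv_natCast_pow hn0.le (by omega)
  set t := (n : ℝ) ^ ((1 : ℝ) / d)
  have e : t / γ + 2 = t * (1 / γ + 2 / t) := by field_simp
  rw [e, mul_pow, htd]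
  nlinarith

theorem dist_le_of_floor_eq {d m : ℕ} (hm : 0 < (m : ℝ)) {x y : Fin d → ℝ}
    (hx : 0 ≤ x) (hy : 0 ≤ y) (h : ∀ i, ⌊x i * m⌋₊ = ⌊y i * m⌋₊) : dist x y ≤ 1 / m := by
  refine (dist_pi_le_iff (by positivity)).2 fun i => ?_
  have hxi : 0 ≤ x i * m := mul_nonneg (hx i) hm.le
  have hyi : 0 ≤ y i * m := mul_nonneg (hy i) hm.le
  have a1 := Nat.floor_le hxi
  have a2 := Nat.lt_floor_add_one (x i * m)
  have b1 := Nat.floor_le hyi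
  have b2 := Nat.lt_floor_add_one (y i * m)
  rw [h i] at a1 a2
  rw [le_div_iff₀ hm, Real.dist_eq, ← abs_of_pos hm, ← abs_mul, abs_le]
  constructor <;> nlinarith

/-- Pigeonhole on the grid of mesh `1/m`: more than `(k-1) (m+1)^d` points of the unit cube contain
`k` points that are pairwise within `1/m`. -/
theorem exists_close_points {d k m n : ℕ} (hm : 0 < (m : ℝ))
    (hcard : (m + 1) ^ d * (k - 1) < n) (p : Fin n → Fin d → ℝ)
    (hp : ∀ v, p v ∈ Set.Icc (0 : Fin d → ℝ) 1) :
    ∃ S : Finset (Fin n), S.card = k ∧ ∀ v₁ ∈ S, ∀ v₂ ∈ S, dist (p v₁) (p v₂) ≤ 1 / m := by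
  have hfl : ∀ v i, ⌊p v i * m⌋₊ < m + 1 := fun v i => by
    have h1 : p v i ≤ 1 := (hp v).2 i
    exact Nat.lt_succ_of_le (Nat.floor_le_of_le (by nlinarith))
  let cell : Fin n → Fin d → Fin (m + 1) := fun v i => ⟨⌊p v i * m⌋₊, hfl v i⟩
  obtain ⟨c, hc⟩ := Fintype.exists_lt_card_fiber_of_mul_lt_card (f := cell) (n := k - 1)
    (by simpa using hcard)
  obtain ⟨S, hS, hSk⟩ := Finset.exists_subset_card_eq (Nat.le_of_pred_lt hc)
  refine ⟨S, hSk, fun v₁ h₁ v₂ h₂ => dist_le_of_floor_eq hm (hp v₁).1 (hp v₂).1 fun i => ?_⟩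
  have e₁ := (Finset.mem_filter.1 (hS h₁)).2
  have e₂ := (Finset.mem_filter.1 (hS h₂)).2
  exact congrArg Fin.val (congrFun (e₁.trans e₂.symm) i)

theorem geometric_kSAT_unsat_high_density (d k : ℕ) (hd : 1 ≤ d) (hk : 2 ≤ k)
    (γ : ℝ) (hγ : 0 < γ) (hγd : (k : ℝ) - 1 < γ ^ d) :
    ∃ N : ℕ, ∀ n ≥ N, ∀ ω : (Fin n × Bool) → (Fin d → ℝ),
      (∀ l, ω l ∈ Set.Icc (0 : Fin d → ℝ) 1) →
      ((∀ α : Fin n → Bool, ∃ S : Finset (Fin n), S.card = k ∧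
          ∀ v₁ ∈ S, ∀ v₂ ∈ S,
            dist (ω (v₁, !(α v₁))) (ω (v₂, !(α v₂))) ≤ γ * (n:ℝ) ^ (-(1:ℝ)/(d:ℝ))) ∧
        ¬ GeomSatisfiable d k n (γ * (n:ℝ) ^ (-(1:ℝ)/(d:ℝ))) ω) := by
  obtain ⟨N, hN⟩ := eventually_density d k hd γ hγ hγd
  refine ⟨N, fun n hn ω hω => ?_⟩
  obtain ⟨hn0, hlt⟩ := hN n hn
  have hr : γ * (n : ℝ) ^ (-(1 : ℝ) / (d : ℝ)) = γ / (n : ℝ) ^ ((1 : ℝ) / d) := by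
    rw [neg_div, Real.rpow_neg hn0.le, div_eq_mul_inv γ]
  rw [hr]
  have ht0 : 0 < (n : ℝ) ^ ((1 : ℝ) / d) := Real.rpow_pos_of_pos hn0 _
  set t := (n : ℝ) ^ ((1 : ℝ) / d)
  have htγ : 0 < t / γ := by positivity
  have hm : (0 : ℝ) < ⌈t / γ⌉₊ := by exact_mod_cast Nat.ceil_pos.2 htγ
  have hmesh : 1 / (⌈t / γ⌉₊ : ℝ) ≤ γ / t := by
    rw [← one_div_div t γ]
    exact one_div_le_one_div_of_le htγ (Nat.le_ceil _)
  have hk1 : (0 : ℝ) ≤ (k : ℝ) - 1 := by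
    have : (2 : ℝ) ≤ k := by exact_mod_cast hk
    linarith
  have hcard : (⌈t / γ⌉₊ + 1) ^ d * (k - 1) < n := by
    have hceil := Nat.ceil_lt_add_one htγ.le
    have hle : ((⌈t / γ⌉₊ : ℝ) + 1) ^ d ≤ (t / γ + 2) ^ d :=
      pow_le_pow_left₀ (by positivity) (by linarith) d
    have : ((⌈t / γ⌉₊ : ℝ) + 1) ^ d * ((k : ℝ) - 1) < n := by nlinarith
    rw [← Nat.cast_lt (α := ℝ)]
    push_cast [Nat.cast_sub (show 1 ≤ k by omega)]
    exact this
  have main : ∀ α : Fin n → Bool, ∃ S : Finset (Fin n), S.card = k ∧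
      ∀ v₁ ∈ S, ∀ v₂ ∈ S, dist (ω (v₁, !(α v₁))) (ω (v₂, !(α v₂))) ≤ γ / t := fun α => by
    obtain ⟨S, hSk, hS⟩ := exists_close_points hm hcard
      (fun v => ω (v, !(α v))) (fun v => hω _)
    exact ⟨S, hSk, fun v₁ h₁ v₂ h₂ => (hS v₁ h₁ v₂ h₂).trans hmesh⟩
  refine ⟨main, ?_⟩
  rintro ⟨α, hα⟩
  obtain ⟨S, hSk, hS⟩ := main α
  -- The falsified literals of the variables in `S` form a clause that `α` violates.
  obtain ⟨l, hl, hle⟩ := hα (S.image fun v => (v, !(α v)))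
    (by rw [Finset.card_image_of_injective _ fun a b h => congrArg Prod.fst h, hSk])
    (by
      intro l₁ h₁ l₂ h₂
      obtain ⟨v₁, hv₁, rfl⟩ := Finset.mem_image.1 h₁
      obtain ⟨v₂, hv₂, rfl⟩ := Finset.mem_image.1 h₂
      exact hS v₁ hv₁ v₂ hv₂)
  obtain ⟨v, -, rfl⟩ := Finset.mem_image.1 hl
  simp at hle
end

section
/- Expected clause count in random geometric k-SAT: fix integers k ≥ 2, d ≥ 1 and a real γ > 0. For each n set t_n = γ·n^{-1/d} and p_n = k·t_n^{k-1} - (k-1)·t_n^k. Then the limit as n → ∞ of C(2n, k)·p_n^d / n equals 2^k · γ^{d(k-1)} · k^d / k!. -/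
/-!
Write `s = n ^ (-1/d)`, so that `s ^ d = 1 / n`. Factoring out `(γ s) ^ (k - 1)`, the `d`-th power
of the clause probability is `γ ^ (d (k - 1)) * n ^ (-(k - 1)) * (k - (k - 1) γ s) ^ d`, so the
expected number of clauses per point is exactly
`(C(2n, k) / (2n) ^ k) * (2 ^ k γ ^ (d (k - 1)) (k - (k - 1) γ s) ^ d)`. The first factor tends to
`1 / k!` (`tendsto_choose_div_pow`), and `s → 0` gives the limit of the second.
-/

open Filter

lemma tendsto_choose_div_pow (k : ℕ) :
    Tendsto (fun n : ℕ => (n.choose k : ℝ) / (n : ℝ) ^ k) atTop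
      (nhds (1 / (k.factorial : ℝ))) := by
  have hE : Asymptotics.IsEquivalent atTop (fun n : ℕ => (n.choose k : ℝ) / (n : ℝ) ^ k)
      (fun n : ℕ => ((n : ℝ) ^ k / (k.factorial : ℝ)) / (n : ℝ) ^ k) :=
    (isEquivalent_choose k).div Asymptotics.IsEquivalent.refl
  refine hE.symm.tendsto_nhds (tendsto_const_nhds.congr' ?_)
  filter_upwards [eventually_ne_atTop 0] with n hn
  have : (n : ℝ) ≠ 0 := by exact_mod_cast hn
  field_simp

theorem expected_clause_count (k d : ℕ) (hk : 2 ≤ k) (hd : 1 ≤ d) (γ : ℝ) (hγ : 0 < γ) :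
    Tendsto (fun n : ℕ =>
        ((Nat.choose (2 * n) k : ℝ) *
            ((k : ℝ) * (γ * (n:ℝ) ^ (-(1:ℝ)/(d:ℝ))) ^ (k - 1) -
              ((k : ℝ) - 1) * (γ * (n:ℝ) ^ (-(1:ℝ)/(d:ℝ))) ^ k) ^ d) / (n : ℝ))
      atTop
      (nhds ((2:ℝ) ^ k * γ ^ (d * (k - 1)) * (k : ℝ) ^ d / (Nat.factorial k : ℝ))) := by
  have hd0 : (0 : ℝ) < d := by exact_mod_cast hd
  have hs : Tendsto (fun n : ℕ => (n : ℝ) ^ (-(1:ℝ)/(d:ℝ))) atTop (nhds 0) := by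
    rw [neg_div]
    exact (tendsto_rpow_neg_atTop (by positivity)).comp tendsto_natCast_atTop_atTop
  have hC : Tendsto (fun n : ℕ => ((2 * n).choose k : ℝ) / ((2 * n : ℕ) : ℝ) ^ k) atTop
      (nhds (1 / (k.factorial : ℝ))) :=
    (tendsto_choose_div_pow k).comp (tendsto_id.const_mul_atTop' (by norm_num))
  have hP : Tendsto (fun n : ℕ => (2:ℝ) ^ k * γ ^ (d * (k - 1)) *
      ((k : ℝ) - ((k : ℝ) - 1) * (γ * (n:ℝ) ^ (-(1:ℝ)/(d:ℝ)))) ^ d) atTop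
      (nhds ((2:ℝ) ^ k * γ ^ (d * (k - 1)) * ((k : ℝ) - ((k : ℝ) - 1) * (γ * 0)) ^ d)) :=
    (((hs.const_mul γ).const_mul _).const_sub _ |>.pow d).const_mul _
  have hL := hC.mul hP
  rw [show 1 / (k.factorial : ℝ) *
      ((2:ℝ) ^ k * γ ^ (d * (k - 1)) * ((k : ℝ) - ((k : ℝ) - 1) * (γ * 0)) ^ d) =
      (2:ℝ) ^ k * γ ^ (d * (k - 1)) * (k : ℝ) ^ d / (Nat.factorial k : ℝ) by
    rw [mul_zero, mul_zero, sub_zero]; ring] at hL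
  refine hL.congr' ?_
  filter_upwards [eventually_gt_atTop 0] with n hn
  have hn0 : (0 : ℝ) < n := by exact_mod_cast hn
  have hsd : ((n:ℝ) ^ (-(1:ℝ)/(d:ℝ))) ^ d = (n : ℝ)⁻¹ := by
    rw [← Real.rpow_natCast, ← Real.rpow_mul hn0.le, div_mul_cancel₀ _ hd0.ne',
      Real.rpow_neg_one]
  obtain ⟨j, rfl⟩ : ∃ j, k = j + 1 := ⟨k - 1, by omega⟩
  generalize (n:ℝ) ^ (-(1:ℝ)/(d:ℝ)) = s at hsd ⊢
  generalize ((2 * n).choose (j + 1) : ℝ) = c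
  rw [Nat.add_sub_cancel]
  have hp : ((j + 1 : ℕ) : ℝ) * (γ * s) ^ j - (((j + 1 : ℕ) : ℝ) - 1) * (γ * s) ^ (j + 1) =
      (γ * s) ^ j * (((j + 1 : ℕ) : ℝ) - (((j + 1 : ℕ) : ℝ) - 1) * (γ * s)) := by ring
  have hpow : ((γ * s) ^ j) ^ d = γ ^ (d * j) * ((n : ℝ)⁻¹) ^ j := by
    rw [← hsd, mul_pow, mul_pow, ← pow_mul, ← pow_mul, ← pow_mul, mul_comm j d]
  rw [hp, mul_pow, hpow]
  generalize (((j + 1 : ℕ) : ℝ) - (((j + 1 : ℕ) : ℝ) - 1) * (γ * s)) ^ d = q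
  push_cast
  rw [mul_pow, inv_pow]
  field_simp
  ring
end

section
/- Existence of unsatisfiable k-CNF formulas with distinct clause supports: let k ≥ 2 be an integer and let u be a positive integer with u ≥ (ln 2)^{1/(k-1)} · (2k)^{k/(k-1)}. Then there exists an assignment of signs ε, associating to each k-element subset S of {1,…,u} a function ε_S : S → {true,false}, such that for every truth assignment α : {1,…,u} → {true,false} there is a k-element subset S with α(i) ≠ ε_S(i) for all i ∈ S. Equivalently, the k-CNF formula with variables x_1,…,x_u consisting of one clause ⋁_{i∈S} ℓ_i per k-element subset S (where ℓ_i = x_i if ε_S(i) = true and ℓ_i = ¬x_i otherwise, and a clause is satisfied by α iff α(i) = ε_S(i) for some i ∈ S) is unsatisfiable, and no two of its clauses share the same set of k variables. -/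
/-!
A random choice of signs leaves a given assignment unfalsified with probability
`(1 - 2⁻ᵏ) ^ C(u, k)`, so by the union bound an unsatisfiable formula exists as soon as
`2 ^ u * (1 - 2⁻ᵏ) ^ C(u, k) < 1`. Here the choice is derandomised
(`exists_signs_card_survivors_le`): processing the supports one at a time, pigeonhole over the
`2 ^ k` patterns on a support `S` gives signs `ε S` whose clause kills at least a `2⁻ᵏ` fraction of
the assignments that are still alive.

Since `1 - x < exp (-x)` for `x ≠ 0`, it suffices that `u * log 2 ≤ 2⁻ᵏ * C(u, k)`. By
`(u / k) ^ k ≤ C(u, k)` (`pow_le_pow_mul_choose`), this follows from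
`log 2 * (2 * k) ^ k ≤ u ^ (k - 1)`, which is the hypothesis raised to the power `k - 1`.
-/

/-- The estimate `(n / k) ^ k ≤ C(n, k)`, cleared of denominators. -/
lemma pow_le_pow_mul_choose (k : ℕ) : ∀ n : ℕ, k ≤ n → n ^ k ≤ k ^ k * n.choose k := by
  induction k with
  | zero => intro n _; simp
  | succ k ih =>
    intro n hn
    obtain ⟨n, rfl⟩ : ∃ m, n = m + 1 := ⟨n - 1, by omega⟩
    have hkn : k ≤ n := by omega
    rcases Nat.eq_zero_or_pos k with rfl | hk
    · simp
    have h1 := ih n hkn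
    have h2 : (n + 1) * n.choose k = (n + 1).choose (k + 1) * (k + 1) :=
      Nat.add_one_mul_choose_eq n k
    -- `(n + 1) / (k + 1) ≤ n / k` because `k ≤ n`
    have h3 : ((n + 1) * k) ^ k ≤ ((k + 1) * n) ^ k := Nat.pow_le_pow_left (by nlinarith) k
    rw [mul_pow, mul_pow] at h3
    have h4 : (n + 1) ^ k * k ^ k ≤ ((k + 1) ^ k * n.choose k) * k ^ k :=
      h3.trans (by nlinarith [Nat.mul_le_mul_left ((k + 1) ^ k) h1])
    have h5 : (n + 1) ^ k ≤ (k + 1) ^ k * n.choose k :=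
      Nat.le_of_mul_le_mul_right h4 (by positivity)
    calc (n + 1) ^ (k + 1) = (n + 1) ^ k * (n + 1) := pow_succ _ _
      _ ≤ ((k + 1) ^ k * n.choose k) * (n + 1) := Nat.mul_le_mul_right _ h5
      _ = (k + 1) ^ k * ((n + 1) * n.choose k) := by ring
      _ = (k + 1) ^ (k + 1) * (n + 1).choose (k + 1) := by rw [h2]; ring

/-- Some sign pattern on `S` has a clause falsified by at least a `2⁻ᵏ` fraction of `A`. -/
lemma exists_signs_card_falsified {u k : ℕ} (S : Finset (Fin u)) (hS : S.card = k)
    (A : Finset (Fin u → Bool)) :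
    ∃ e : Fin u → Bool,
      (A.card : ℝ) / 2 ^ k ≤ ((A.filter fun α => ∀ i ∈ S, α i ≠ e i).card : ℝ) := by
  classical
  obtain ⟨p, -, hp⟩ := Finset.exists_le_card_fiber_of_nsmul_le_card_of_maps_to
    (s := A) (t := (Finset.univ : Finset (S → Bool))) (f := fun α i => α i)
    (b := (A.card : ℝ) / 2 ^ k) (fun _ _ => Finset.mem_univ _) Finset.univ_nonempty
    (by simp [hS]; field_simp; rfl)
  refine ⟨fun i => if h : i ∈ S then !(p ⟨i, h⟩) else true, hp.trans ?_⟩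
  refine Nat.cast_le.mpr (Finset.card_le_card ?_)
  intro α hα
  simp only [Finset.mem_filter] at hα ⊢
  refine ⟨hα.1, fun i hi => ?_⟩
  simp [hi, ← hα.2]

/-- Signs can be chosen on a family `T` of `k`-sets so that at most `2 ^ u * (1 - 2⁻ᵏ) ^ |T|`
assignments satisfy all the clauses supported on `T`. -/
lemma exists_signs_card_survivors_le {u k : ℕ} (T : Finset (Finset (Fin u)))
    (hT : ∀ S ∈ T, S.card = k) :
    ∃ ε : Finset (Fin u) → (Fin u → Bool),
      ((Finset.univ.filter fun α : Fin u → Bool => ∀ S ∈ T, ∃ i ∈ S, α i = ε S i).card : ℝ)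
        ≤ 2 ^ u * (1 - 1 / 2 ^ k) ^ T.card := by
  classical
  induction T using Finset.induction_on with
  | empty => exact ⟨fun _ _ => true, by simp⟩
  | insert S T hST ih =>
    obtain ⟨ε, hε⟩ := ih fun S' h => hT S' (Finset.mem_insert_of_mem h)
    set A := Finset.univ.filter fun α : Fin u → Bool => ∀ S ∈ T, ∃ i ∈ S, α i = ε S i with hA
    obtain ⟨e, he⟩ := exists_signs_card_falsified S (hT S (Finset.mem_insert_self _ _)) A
    refine ⟨Function.update ε S e, ?_⟩
    have hsub : (Finset.univ.filter fun α : Fin u → Bool =>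
        ∀ S' ∈ insert S T, ∃ i ∈ S', α i = Function.update ε S e S' i) ⊆
        A.filter fun α => ¬ ∀ i ∈ S, α i ≠ e i := by
      intro α hα
      simp only [Finset.mem_filter, Finset.mem_univ, true_and, hA] at hα ⊢
      refine ⟨fun S' hS' => ?_, ?_⟩
      · have hne : S' ≠ S := fun h => hST (h ▸ hS')
        simpa [Function.update_of_ne hne] using hα S' (Finset.mem_insert_of_mem hS')
      · simpa using hα S (Finset.mem_insert_self _ _)
    have hsplit : ((A.filter fun α => ∀ i ∈ S, α i ≠ e i).card : ℝ) +
        ((A.filter fun α => ¬ ∀ i ∈ S, α i ≠ e i).card : ℝ) = A.card := by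
      exact_mod_cast Finset.card_filter_add_card_filter_not (s := A) _
    have hle : ((Finset.univ.filter fun α : Fin u → Bool =>
        ∀ S' ∈ insert S T, ∃ i ∈ S', α i = Function.update ε S e S' i).card : ℝ) ≤
        (A.filter fun α => ¬ ∀ i ∈ S, α i ≠ e i).card :=
      Nat.cast_le.mpr (Finset.card_le_card hsub)
    have h0 : (0 : ℝ) ≤ 1 - 1 / 2 ^ k := by
      rw [sub_nonneg, div_le_one (by positivity)]
      exact one_le_pow₀ (by norm_num)
    rw [Finset.card_insert_of_notMem hST, pow_succ, ← mul_assoc]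
    calc _ ≤ (A.card : ℝ) * (1 - 1 / 2 ^ k) := by
          rw [mul_sub, mul_one, mul_one_div]; linarith
      _ ≤ _ := mul_le_mul_of_nonneg_right hε h0

theorem exists_unsat_kCNF_distinct_supports (k u : ℕ) (hk : 2 ≤ k) (hu : 0 < u)
    (hbound : (Real.log 2) ^ ((1:ℝ) / ((k:ℝ) - 1)) * ((2 * k : ℕ) : ℝ) ^ ((k:ℝ) / ((k:ℝ) - 1))
        ≤ (u : ℝ)) :
    ∃ ε : Finset (Fin u) → (Fin u → Bool),
      ∀ α : Fin u → Bool, ∃ S : Finset (Fin u), S.card = k ∧ ∀ i ∈ S, α i ≠ ε S i := by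
  classical
  obtain ⟨m, rfl⟩ : ∃ m, k = m + 1 := ⟨k - 1, by omega⟩
  have hm : (m : ℝ) ≠ 0 := by
    have : m ≠ 0 := by omega
    exact_mod_cast this
  have hlog : 0 < Real.log 2 := Real.log_pos (by norm_num)
  have hlog' : (1 / 2 : ℝ) < Real.log 2 := by linarith [Real.log_two_gt_d9]
  have hu' : (0 : ℝ) < u := by exact_mod_cast hu
  have hpow : Real.log 2 * (2 * ((m : ℝ) + 1)) ^ (m + 1) ≤ (u : ℝ) ^ m := by
    have h := pow_le_pow_left₀ (by positivity) hbound m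
    rw [mul_pow, ← Real.rpow_mul_natCast hlog.le, ← Real.rpow_mul_natCast (by positivity)] at h
    have e1 : (1 : ℝ) / (((m + 1 : ℕ) : ℝ) - 1) * m = 1 := by push_cast; rw [add_sub_cancel_right, div_mul_cancel₀ _ hm]
    have e2 : ((m + 1 : ℕ) : ℝ) / (((m + 1 : ℕ) : ℝ) - 1) * m = ((m + 1 : ℕ) : ℝ) := by
      push_cast; rw [add_sub_cancel_right, div_mul_cancel₀ _ hm]
    rw [e1, e2, Real.rpow_one, Real.rpow_natCast] at h
    push_cast at h
    exact h
  have hku : m + 1 ≤ u := by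
    by_contra hlt
    have h1 : (u : ℝ) ^ m ≤ ((m : ℝ) + 1) ^ m :=
      pow_le_pow_left₀ hu'.le (by exact_mod_cast (not_le.mp hlt).le) m
    have h2 : ((m : ℝ) + 1) ^ m < Real.log 2 * (2 * ((m : ℝ) + 1)) ^ (m + 1) := by
      have ha : (0 : ℝ) < ((m : ℝ) + 1) ^ m := by positivity
      have hb : (1 : ℝ) ≤ 2 ^ m := one_le_pow₀ (by norm_num)
      have hc : (1 : ℝ) < m + 1 := by
        have : 0 < m := by omega
        exact_mod_cast Nat.succ_lt_succ this
      rw [mul_pow, pow_succ, pow_succ]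
      have hd : (1 : ℝ) < Real.log 2 * 2 * (2 ^ m * ((m : ℝ) + 1)) :=
        one_lt_mul_of_le_of_lt (by linarith) (by nlinarith)
      nlinarith [mul_lt_mul_of_pos_left hd ha]
    linarith
  have hchoose : (u : ℝ) ^ (m + 1) ≤ ((m : ℝ) + 1) ^ (m + 1) * (u.choose (m + 1) : ℝ) := by
    exact_mod_cast pow_le_pow_mul_choose (m + 1) u hku
  set N := u.choose (m + 1) with hN
  have hNpos : N ≠ 0 := (Nat.choose_pos hku).ne'
  have hmain : (u : ℝ) * Real.log 2 ≤ N * (1 / 2 ^ (m + 1)) := by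
    rw [mul_one_div, le_div_iff₀ (by positivity)]
    refine le_of_mul_le_mul_left ?_ (by positivity : (0 : ℝ) < ((m : ℝ) + 1) ^ (m + 1))
    calc ((m : ℝ) + 1) ^ (m + 1) * (u * Real.log 2 * 2 ^ (m + 1))
        = u * (Real.log 2 * (2 * ((m : ℝ) + 1)) ^ (m + 1)) := by rw [mul_pow]; ring
      _ ≤ u * (u : ℝ) ^ m := mul_le_mul_of_nonneg_left hpow hu'.le
      _ = (u : ℝ) ^ (m + 1) := by ring
      _ ≤ _ := hchoose
  have hlt : (2 : ℝ) ^ u * (1 - 1 / 2 ^ (m + 1)) ^ N < 1 := by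
    have hx : (0 : ℝ) < 1 / 2 ^ (m + 1) := by positivity
    have h0 : (0 : ℝ) ≤ 1 - 1 / 2 ^ (m + 1) := by
      rw [sub_nonneg, div_le_one (by positivity)]
      exact one_le_pow₀ (by norm_num)
    have h1 : (1 - 1 / 2 ^ (m + 1) : ℝ) < Real.exp (-(1 / 2 ^ (m + 1))) :=
      Real.one_sub_lt_exp_neg hx.ne'
    have h2 := pow_lt_pow_left₀ h1 h0 hNpos
    have h3 : (2 : ℝ) ^ u = Real.exp (u * Real.log 2) := by
      rw [Real.exp_nat_mul, Real.exp_log (by norm_num)]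
    calc (2 : ℝ) ^ u * (1 - 1 / 2 ^ (m + 1)) ^ N
        < 2 ^ u * Real.exp (-(1 / 2 ^ (m + 1))) ^ N := by gcongr
      _ = Real.exp (u * Real.log 2 + N * (-(1 / 2 ^ (m + 1)))) := by
          rw [h3, ← Real.exp_nat_mul, ← Real.exp_add]
      _ ≤ 1 := by
          rw [Real.exp_le_one_iff]; linarith
  obtain ⟨ε, hε⟩ := exists_signs_card_survivors_le (k := m + 1)
    (Finset.powersetCard (m + 1) (Finset.univ : Finset (Fin u)))
    (fun S hS => (Finset.mem_powersetCard.mp hS).2)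
  rw [Finset.card_powersetCard, Finset.card_univ, Fintype.card_fin] at hε
  have hcard := hε.trans_lt hlt
  rw [Nat.cast_lt_one, Finset.card_eq_zero] at hcard
  refine ⟨ε, fun α => ?_⟩
  by_contra! hα
  have hmem : α ∈ Finset.univ.filter fun α : Fin u → Bool =>
      ∀ S ∈ Finset.powersetCard (m + 1) Finset.univ, ∃ i ∈ S, α i = ε S i := by
    simp only [Finset.mem_filter, Finset.mem_univ, true_and]
    exact fun S hS => hα S (Finset.mem_powersetCard.mp hS).2
  rw [hcard] at hmem
  simp at hmem
end

section
/- First-moment inequality for random-sign formulas: let k ≥ 2 be an integer and let u be a positive integer with u ≥ (ln 2)^{1/(k-1)} · (2k)^{k/(k-1)} (as a real-number inequality). Then 2^u · (1 - 2^{-k})^{C(u,k)} < 1, where C(u,k) is the binomial coefficient u choose k. -/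
/-!
Raising the hypothesis to the power `k - 1` gives `log 2 * (2k)^k ≤ u^(k-1)`, which forces `k ≤ u`.
The classical estimate `(u/k)^k ≤ C(u,k)` (`pow_le_choose_of_mul_le`) then yields
`u * log 2 ≤ C(u,k) * 2^(-k)`, and the strict inequality `1 - x < exp (-x)` at `x = 2^(-k)`
finishes the proof.
-/

/-- The bound `(n/k)^k ≤ C(n,k)`, with `n/k` replaced by any `c ≥ 1` below it, so that the
induction on `k` can keep `c` fixed. -/
theorem pow_le_choose_of_mul_le (c : ℝ) (hc : 1 ≤ c) (k n : ℕ) (h : c * k ≤ n) :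
    c ^ k ≤ (n.choose k : ℝ) := by
  induction k generalizing n with
  | zero => simp
  | succ k ih =>
    cases n with
    | zero =>
      push_cast at h
      nlinarith [(Nat.cast_nonneg k : (0:ℝ) ≤ k)]
    | succ n =>
      push_cast at h
      have h1 := ih n (by linarith)
      have h2 : ((n:ℝ) + 1) * (n.choose k : ℝ) = ((n+1).choose (k+1) : ℝ) * ((k:ℝ) + 1) := by
        exact_mod_cast Nat.add_one_mul_choose_eq n k
      have hk : (0:ℝ) < (k:ℝ) + 1 := by positivity
      refine le_of_mul_le_mul_right ?_ hk
      calc c ^ (k+1) * ((k:ℝ) + 1) = (c * ((k:ℝ) + 1)) * c ^ k := by ring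
        _ ≤ ((n:ℝ) + 1) * (n.choose k : ℝ) := by gcongr
        _ = _ := h2

theorem first_moment_inequality (k u : ℕ) (hk : 2 ≤ k) (hu : 0 < u)
    (hbound : (Real.log 2) ^ ((1:ℝ) / ((k:ℝ) - 1)) * ((2 * k : ℕ) : ℝ) ^ ((k:ℝ) / ((k:ℝ) - 1))
        ≤ (u : ℝ)) :
    (2:ℝ) ^ u * (1 - (2:ℝ) ^ (-(k:ℤ))) ^ (Nat.choose u k) < 1 := by
  have hlog : 0 < Real.log 2 := Real.log_pos (by norm_num)
  have hlog2 : (1:ℝ) / 2 < Real.log 2 := by linarith [Real.log_two_gt_d9]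
  obtain ⟨m, rfl⟩ : ∃ m, k = m + 1 := ⟨k - 1, by omega⟩
  have hm : 1 ≤ m := by omega
  have hm0 : (m:ℝ) ≠ 0 := by positivity
  have hu' : (0:ℝ) < u := by exact_mod_cast hu
  have hpow : Real.log 2 * (2 * ((m:ℝ) + 1)) ^ (m + 1) ≤ (u:ℝ) ^ m := by
    have h := pow_le_pow_left₀ (by positivity) hbound m
    rw [mul_pow, ← Real.rpow_mul_natCast hlog.le, ← Real.rpow_mul_natCast (by positivity)] at h
    have e1 : (1:ℝ) / (((m + 1 : ℕ):ℝ) - 1) * m = 1 := by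
      push_cast; rw [add_sub_cancel_right]; field_simp
    have e2 : ((m + 1 : ℕ):ℝ) / (((m + 1 : ℕ):ℝ) - 1) * m = ((m + 1 : ℕ):ℝ) := by
      push_cast; rw [add_sub_cancel_right]; field_simp
    rw [e1, e2, Real.rpow_one, Real.rpow_natCast] at h
    push_cast at h
    exact h
  have hku : (m:ℝ) + 1 ≤ u := by
    by_contra! hlt
    have h1 : (u:ℝ) ^ m ≤ ((m:ℝ) + 1) ^ m := by gcongr
    have h2 : (1:ℝ) ≤ 2 ^ m := one_le_pow₀ (by norm_num)
    have h3 : (0:ℝ) < ((m:ℝ) + 1) ^ m := by positivity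
    have h4 : (1:ℝ) < Real.log 2 * 2 ^ (m + 1) * ((m:ℝ) + 1) := by
      have : (1:ℝ) ≤ m := by exact_mod_cast hm
      have h5 : (1:ℝ) < Real.log 2 * 2 ^ (m + 1) := by rw [pow_succ]; nlinarith
      nlinarith
    have h6 : Real.log 2 * (2 * ((m:ℝ) + 1)) ^ (m + 1)
        = Real.log 2 * 2 ^ (m + 1) * ((m:ℝ) + 1) * ((m:ℝ) + 1) ^ m := by
      rw [mul_pow, pow_succ ((m:ℝ) + 1)]; ring
    nlinarith
  have hch : ((u:ℝ) / ((m:ℝ) + 1)) ^ (m + 1) ≤ (u.choose (m + 1) : ℝ) := by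
    apply pow_le_choose_of_mul_le
    · rwa [one_le_div (by positivity)]
    · push_cast
      rw [div_mul_cancel₀ _ (by positivity)]
  have hx : (2:ℝ) ^ (-((m + 1 : ℕ):ℤ)) = ((2:ℝ) ^ (m + 1))⁻¹ := by
    rw [zpow_neg, zpow_natCast]
  rw [hx]
  set x : ℝ := ((2:ℝ) ^ (m + 1))⁻¹ with hxdef
  have hxpos : 0 < x := by positivity
  have hx1 : x ≤ 1 := inv_le_one_of_one_le₀ (one_le_pow₀ (by norm_num))
  have hC : u.choose (m + 1) ≠ 0 :=
    (Nat.choose_pos (by exact_mod_cast hku)).ne'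
  have key : (u:ℝ) * Real.log 2 ≤ (u.choose (m + 1) : ℝ) * x := by
    rw [hxdef, ← div_eq_mul_inv, le_div_iff₀ (by positivity)]
    refine le_trans ?_ hch
    rw [div_pow, le_div_iff₀ (by positivity)]
    calc (u:ℝ) * Real.log 2 * 2 ^ (m + 1) * ((m:ℝ) + 1) ^ (m + 1)
        = u * (Real.log 2 * (2 * ((m:ℝ) + 1)) ^ (m + 1)) := by rw [mul_pow]; ring
      _ ≤ u * (u:ℝ) ^ m := by gcongr
      _ = (u:ℝ) ^ (m + 1) := by ring
  have hexp : 1 - x < Real.exp (-x) := by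
    linarith [Real.add_one_lt_exp (neg_ne_zero.mpr hxpos.ne')]
  calc (2:ℝ) ^ u * (1 - x) ^ (u.choose (m + 1))
      < (2:ℝ) ^ u * Real.exp (-x) ^ (u.choose (m + 1)) := by
        have := pow_lt_pow_left₀ hexp (by linarith) hC
        gcongr
    _ = Real.exp (u * Real.log 2 - (u.choose (m + 1) : ℝ) * x) := by
        rw [← Real.exp_nat_mul, sub_eq_add_neg, Real.exp_add, Real.exp_nat_mul (Real.log 2),
          Real.exp_log (by norm_num), mul_neg]
    _ ≤ 1 := Real.exp_le_one_iff.mpr (by linarith)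
end

section
/- Lower tail of the Poisson distribution below its mean: for every integer k ≥ 0 and every real μ with μ ≥ k + ln 2, one has ∑_{j=0}^{k-1} e^{-μ}·μ^j/j! < 1/2. In other words, a Poisson random variable with mean μ ≥ k + ln 2 is at least k with probability greater than 1/2. -/
/-!
Write `a j = μ ^ j / j!`. Reflecting the indices below `k` about `k - 1/2` pairs `a (k - 1 - i)`
with `a (k + i)`, and `a (k - 1 - i) ≤ a (k + i)` as soon as `μ ≥ k`: the quotient
`(k + i)! / (k - 1 - i)!` is the product of the `2 i + 1` integers centred at `k`, hence at most
`k ^ (2 i + 1)` because `(k - s) (k + s) ≤ k ^ 2`. Summing over `i < k`, twice the sum of the first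
`k` terms is at most the sum of the first `2 k` terms, which is smaller than `exp μ`.
Only `μ ≥ k` and `μ > 0` are needed.
-/

/-- A product of `2 i + 1` consecutive integers is at most the corresponding power of the middle
one. The induction on `i` adds one factor at each end, keeping the middle fixed. -/
lemma factorial_le_middle_pow (i : ℕ) : ∀ n : ℕ,
    (n + 2 * i + 1).factorial ≤ (n + i + 1) ^ (2 * i + 1) * n.factorial := by
  induction i with
  | zero => intro n; simp [Nat.factorial_succ]
  | succ i ih =>
    intro n
    have h := ih (n + 1)
    have e : n + 2 * (i + 1) + 1 = (n + 1 + 2 * i + 1) + 1 := by ring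
    rw [e, Nat.factorial_succ]
    calc (n + 1 + 2 * i + 1 + 1) * (n + 1 + 2 * i + 1).factorial
        ≤ (n + 1 + 2 * i + 1 + 1) *
            ((n + 1 + i + 1) ^ (2 * i + 1) * (n + 1).factorial) := by gcongr
      _ = ((n + 2 * i + 3) * (n + 1)) * ((n + i + 2) ^ (2 * i + 1) * n.factorial) := by
          rw [Nat.factorial_succ]; ring
      _ ≤ (n + i + 2) ^ 2 * ((n + i + 2) ^ (2 * i + 1) * n.factorial) := by
          gcongr; nlinarith
      _ = (n + (i + 1) + 1) ^ (2 * (i + 1) + 1) * n.factorial := by ring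

lemma reflected_term_le (n i : ℕ) (μ : ℝ) (h : (n : ℝ) + i + 1 ≤ μ) :
    μ ^ n / (n.factorial : ℝ) ≤ μ ^ (n + 2 * i + 1) / ((n + 2 * i + 1).factorial : ℝ) := by
  have hμ : 0 ≤ μ := le_trans (by positivity) h
  have h1 : ((n + 2 * i + 1).factorial : ℝ) ≤ μ ^ (2 * i + 1) * n.factorial :=
    calc ((n + 2 * i + 1).factorial : ℝ)
        ≤ ((n : ℝ) + i + 1) ^ (2 * i + 1) * n.factorial := by
          exact_mod_cast factorial_le_middle_pow i n
      _ ≤ μ ^ (2 * i + 1) * n.factorial := by gcongr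
  rw [div_le_div_iff₀ (by positivity) (by positivity)]
  calc μ ^ n * ((n + 2 * i + 1).factorial : ℝ)
      ≤ μ ^ n * (μ ^ (2 * i + 1) * n.factorial) := by gcongr
    _ = μ ^ (n + 2 * i + 1) * n.factorial := by ring

theorem poisson_lower_tail (k : ℕ) (μ : ℝ) (hμ : (k : ℝ) + Real.log 2 ≤ μ) :
    ∑ j ∈ Finset.range k, Real.exp (-μ) * μ ^ j / (Nat.factorial j : ℝ) < 1 / 2 := by
  have hlog : 0 < Real.log 2 := Real.log_pos one_lt_two
  have hk : (k : ℝ) ≤ μ := by linarith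
  have hpos : 0 < μ := by linarith [Nat.cast_nonneg (α := ℝ) k]
  have hpair : ∑ j ∈ Finset.range k, μ ^ j / (j.factorial : ℝ)
      ≤ ∑ i ∈ Finset.range k, μ ^ (k + i) / ((k + i).factorial : ℝ) := by
    rw [← Finset.sum_range_reflect]
    refine Finset.sum_le_sum fun i hi => ?_
    obtain ⟨n, rfl⟩ : ∃ n, k = n + i + 1 :=
      ⟨k - 1 - i, by have := Finset.mem_range.1 hi; omega⟩
    have e1 : n + i + 1 - 1 - i = n := by omega
    have e2 : n + i + 1 + i = n + 2 * i + 1 := by ring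
    rw [e1, e2]
    exact reflected_term_le n i μ (by exact_mod_cast hk)
  -- The positive term of index `2 k` makes the comparison with the exponential strict.
  have hexp := Real.sum_le_exp_of_nonneg hpos.le (k + k + 1)
  rw [Finset.sum_range_succ, Finset.sum_range_add] at hexp
  have hlast : 0 < μ ^ (k + k) / ((k + k).factorial : ℝ) := by positivity
  have hlt : ∑ j ∈ Finset.range k, μ ^ j / (j.factorial : ℝ) < Real.exp μ / 2 := by linarith
  calc ∑ j ∈ Finset.range k, Real.exp (-μ) * μ ^ j / (Nat.factorial j : ℝ)
      = Real.exp (-μ) * ∑ j ∈ Finset.range k, μ ^ j / (j.factorial : ℝ) := by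
        simp only [Finset.mul_sum, mul_div_assoc]
    _ < Real.exp (-μ) * (Real.exp μ / 2) := by gcongr
    _ = 1 / 2 := by rw [← mul_div_assoc, ← Real.exp_add, neg_add_cancel, Real.exp_zero]
end

section
/- Asymptotics of a Poisson-weighted sum: for all reals μ > 0 and c > 0, the limit as n → ∞ (over positive integers n) of n^2 · ∑_{j=0}^∞ e^{-μ}·μ^j/j! · (1 - e^{-c·j/n})^2 equals c^2·(μ + μ^2). -/
open Filter

/-!
Write the prefactor `n ^ 2` inside the sum. For fixed `j`, the quantity
`n * (1 - exp (-(c * j) / n))` is a difference quotient at `0` of `t ↦ 1 - exp (-(c * j) * t)`,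
so it tends to `c * j`; moreover `0 ≤ 1 - exp (-x) ≤ x` for `x ≥ 0` bounds it by `c * j` for
every `n`. As `∑ j, exp (-μ) * μ ^ j / j! * j ^ 2 = μ + μ ^ 2` converges
(`hasSum_poisson_second_moment`), dominated convergence for series (Tannery's theorem) gives
the limit `c ^ 2 * (μ + μ ^ 2)`.
-/

/-- The Stein–Chen identity `E[X g(X)] = μ E[g(X + 1)]` for a Poisson variable `X` of mean `μ`. -/
lemma hasSum_poisson_mul_id {μ S : ℝ} {g : ℕ → ℝ}
    (h : HasSum (fun j : ℕ => Real.exp (-μ) * μ ^ j / (Nat.factorial j : ℝ) * g (j + 1)) S) :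
    HasSum (fun j : ℕ => Real.exp (-μ) * μ ^ j / (Nat.factorial j : ℝ) * (j * g j)) (μ * S) := by
  rw [← hasSum_nat_add_iff' 1]
  simp only [Finset.range_one, Finset.sum_singleton, Nat.cast_zero, zero_mul, mul_zero, sub_zero]
  refine (congrArg (HasSum · _) (funext fun j => ?_)).mp (h.mul_left μ)
  symm
  rw [Nat.factorial_succ]
  have : (Nat.factorial j : ℝ) ≠ 0 := by positivity
  have : (j : ℝ) + 1 ≠ 0 := by positivity
  push_cast
  field_simp
  ring

lemma hasSum_poisson_second_moment (μ : ℝ) :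
    HasSum (fun j : ℕ => Real.exp (-μ) * μ ^ j / (Nat.factorial j : ℝ) * (j : ℝ) ^ 2)
      (μ + μ ^ 2) := by
  have h0 : HasSum (fun j : ℕ => Real.exp (-μ) * μ ^ j / (Nat.factorial j : ℝ) * 1) 1 := by
    have h := (NormedSpace.expSeries_div_hasSum_exp μ).mul_left (Real.exp (-μ))
    rw [← Real.exp_eq_exp_ℝ, ← Real.exp_add, neg_add_cancel, Real.exp_zero] at h
    simpa only [mul_div_assoc, mul_one] using h
  have h1 := hasSum_poisson_mul_id (g := fun _ => 1) h0
  have h2 := hasSum_poisson_mul_id (g := fun j => (j : ℝ)) (μ := μ) (S := μ + 1) (by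
    convert h1.add h0 using 2 with j
    · push_cast; ring
    · ring)
  convert h2 using 2
  · ring
  · ring

lemma tendsto_mul_one_sub_exp_neg_div (a : ℝ) :
    Tendsto (fun n : ℕ => (n : ℝ) * (1 - Real.exp (-a / n))) atTop (nhds a) := by
  have hd : HasDerivAt (fun t : ℝ => 1 - Real.exp (-a * t)) a 0 := by
    simpa using (((hasDerivAt_id (0 : ℝ)).const_mul (-a)).exp).const_sub 1
  have h := hd.tendsto_slope_zero_right.comp
    (tendsto_inv_atTop_nhdsGT_zero.comp (tendsto_natCast_atTop_atTop (R := ℝ)))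
  refine h.congr fun n => ?_
  simp [div_eq_mul_inv]

/-- Also valid for `n = 0`, where the left-hand side vanishes. -/
lemma sq_mul_one_sub_exp_neg_div_sq_le {a : ℝ} (ha : 0 ≤ a) (n : ℕ) :
    (n : ℝ) ^ 2 * (1 - Real.exp (-a / n)) ^ 2 ≤ a ^ 2 := by
  rcases Nat.eq_zero_or_pos n with rfl | hn
  · simpa using sq_nonneg a
  have hn' : (0 : ℝ) < n := by exact_mod_cast hn
  have hx : 0 ≤ a / n := by positivity
  have h1 := Real.add_one_le_exp (-a / n)
  have h2 : Real.exp (-a / n) ≤ 1 := Real.exp_le_one_iff.2 (by rw [neg_div]; linarith)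
  have h3 : (n : ℝ) * (1 - Real.exp (-a / n)) ≤ a := by
    have : (n : ℝ) * (1 - Real.exp (-a / n)) ≤ n * (a / n) := by
      gcongr
      rw [neg_div] at h1 ⊢
      linarith
    rwa [mul_div_cancel₀ _ hn'.ne'] at this
  rw [← mul_pow]
  exact pow_le_pow_left₀ (mul_nonneg hn'.le (by linarith)) h3 2

theorem poisson_weighted_sum_asymptotics (μ c : ℝ) (hμ : 0 < μ) (hc : 0 < c) :
    Tendsto (fun n : ℕ =>
        (n : ℝ) ^ 2 * ∑' j : ℕ, Real.exp (-μ) * μ ^ j / (Nat.factorial j : ℝ) *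
          (1 - Real.exp (-(c * (j : ℝ)) / (n : ℝ))) ^ 2)
      atTop (nhds (c ^ 2 * (μ + μ ^ 2))) := by
  have hS : HasSum (fun j : ℕ => Real.exp (-μ) * μ ^ j / (Nat.factorial j : ℝ) * (c * j) ^ 2)
      (c ^ 2 * (μ + μ ^ 2)) := by
    refine (congrArg (HasSum · _) (funext fun j => ?_)).mp
      ((hasSum_poisson_second_moment μ).mul_left (c ^ 2))
    ring
  simp_rw [← tsum_mul_left]
  rw [← hS.tsum_eq]
  refine tendsto_tsum_of_dominated_convergence hS.summable (fun j => ?_)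
    (Eventually.of_forall fun n j => ?_)
  · refine (((tendsto_mul_one_sub_exp_neg_div (c * j)).pow 2).const_mul _).congr fun n => ?_
    ring
  · have hw : 0 ≤ Real.exp (-μ) * μ ^ j / (Nat.factorial j : ℝ) := by positivity
    rw [Real.norm_of_nonneg (by positivity), mul_left_comm]
    exact mul_le_mul_of_nonneg_left
      (sq_mul_one_sub_exp_neg_div_sq_le (by positivity) n) hw
end
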